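/- arXiv:2604.22267 — 2 statements merged into one kernel-verified Lean document; each statement's English description precedes it below -/
import Mathlib

section
/- Let q be a real number with 0 < q < 1. Then Ω₁ − Ω₂ = (ψ(q²)² − q²·ψ(q^{10})²) / ψ(−q⁵)². -/
/-- Ramanujan's theta function `f(a,b) = ∑_{n ∈ ℤ} a^(n(n+1)/2) b^(n(n-1)/2)`. -/
noncomputable def ramTheta (a b : ℂ) : ℂ :=
  ∑' n : ℤ, a ^ ((n * (n + 1)) / 2).toNat * b ^ ((n * (n - 1)) / 2).toNat

/-- `φ(q) = f(q,q)`. -/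
noncomputable def phi (q : ℂ) : ℂ := ramTheta q q

/-- `ψ(q) = f(q,q³)`. -/
noncomputable def psi (q : ℂ) : ℂ := ramTheta q (q ^ 3)

/-- `(a;q)_∞ = ∏_{k=0}^∞ (1 - a q^k)`. -/
noncomputable def qPochInf (a q : ℂ) : ℂ := ∏' k : ℕ, (1 - a * q ^ k)

noncomputable def Omega1 (q : ℝ) : ℂ :=
  ramTheta ((q : ℂ) ^ 4) ((q : ℂ) ^ 6) / ramTheta (-(q : ℂ)) (-(q : ℂ) ^ 9)

noncomputable def Omega2 (q : ℝ) : ℂ :=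
  (q : ℂ) * ramTheta ((q : ℂ) ^ 2) ((q : ℂ) ^ 8) / ramTheta (-(q : ℂ) ^ 3) (-(q : ℂ) ^ 7)

/-!
Splitting `ℤ` and `ℤ × ℤ` into cosets of sublattices dissects theta series and their products.

* Index `2` in `ℤ × ℤ` gives Ramanujan's formula for `f(a, b) f(c, d)` with `ab = cd`. Applied to
  `f(-q, q⁴) f(q², -q³)` it produces exactly the numerator of `Ω₁ - Ω₂` over the common denominator
  `f(-q, -q⁹) f(-q³, -q⁷)`; combined with the even-odd dissection of `f(a, b)` it gives
  `f(a, b) ψ(ab) = f(a, ab²) f(b, a²b)`, which turns that numerator, multiplied by `ψ(-q⁵)²`, into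
  the common denominator times `f(q², q⁸) f(q⁴, q⁶)`.
* Index `5`, with `ℤ × ℤ` viewed as `ℤ[i]` and the sublattice as the ideal `(2 + i)`, dissects
  `f(1, q)² = 4 ψ(q)²` and yields `ψ(q)² - q ψ(q⁵)² = f(q, q⁴) f(q², q³)`.

That the denominators do not vanish follows by descent: if `f(a, b) = 0`, then `f(a, ab²) = 0` or
`f(b, a²b) = 0`, and repeating this makes one argument arbitrarily small while the other stays
bounded away from the unit circle, where `f` is nonzero by a crude estimate.
-/

open Complex

/-- The `n`-th term of the series defining Ramanujan's `f(a, b)`, named so that the series can be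
split and rearranged. -/
noncomputable def ramThetaTerm (a b : ℂ) (n : ℤ) : ℂ :=
  a ^ ((n * (n + 1)) / 2).toNat * b ^ ((n * (n - 1)) / 2).toNat

section SeminormedRing

variable {R : Type*} [SeminormedRing R] {x : R}

theorem norm_pow_lt_one (h : ‖x‖ < 1) {k : ℕ} (hk : k ≠ 0) : ‖x ^ k‖ < 1 :=
  (norm_pow_le' x hk.pos).trans_lt (pow_lt_one₀ (norm_nonneg x) h hk)

theorem norm_neg_pow_lt_one (h : ‖x‖ < 1) {k : ℕ} (hk : k ≠ 0) : ‖-x ^ k‖ < 1 := by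
  rw [norm_neg]
  exact norm_pow_lt_one h hk

end SeminormedRing

section Series

theorem tsum_eq_sum_tsum_of_bijective {ι κ γ α : Type*} [Fintype ι] [AddCommGroup α]
    [UniformSpace α] [IsUniformAddGroup α] [CompleteSpace α] [T2Space α] {e : ι × κ → γ}
    (he : e.Bijective) {f : γ → α} (hf : Summable f) :
    ∑' x, f x = ∑ i, ∑' y, f (e (i, y)) := by
  have hfe : Summable fun p ↦ f (e p) := (Equiv.ofBijective e he).summable_iff.mpr hf
  rw [← (Equiv.ofBijective e he).tsum_eq f, ← tsum_fintype (L := .unconditional ι)]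
  exact hfe.tsum_prod

theorem ramTheta_eq_tsum (a b : ℂ) : ramTheta a b = ∑' n, ramThetaTerm a b n := rfl

theorem ramThetaTerm_neg (a b : ℂ) (n : ℤ) : ramThetaTerm a b (-n) = ramThetaTerm b a n := by
  unfold ramThetaTerm
  rw [show -n * (-n + 1) = n * (n - 1) by ring, show -n * (-n - 1) = n * (n + 1) by ring, mul_comm]

theorem ramThetaTerm_natCast (a b : ℂ) (n : ℕ) :
    ramThetaTerm a b n = (a * b) ^ n.choose 2 * a ^ n := by
  have toNat_half (m : ℕ) : ((m : ℤ) * (m + 1) / 2).toNat = (m + 1).choose 2 := by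
    rw [Nat.choose_two_right, Nat.add_sub_cancel, mul_comm]
    norm_cast
  cases n with
  | zero => simp [ramThetaTerm]
  | succ m =>
    have hpred : ((m + 1 : ℕ) : ℤ) * ((m + 1 : ℕ) - 1) = m * (m + 1) := by push_cast; ring
    rw [ramThetaTerm, toNat_half, hpred, toNat_half, Nat.choose_succ_succ' (m + 1) 1,
      Nat.choose_one_right]
    ring

theorem ramThetaTerm_exp (α β : ℂ) (n : ℤ) :
    ramThetaTerm (exp α) (exp β) n = exp (α * (n * (n + 1) / 2) + β * (n * (n - 1) / 2)) := by
  have exp_natCast (α β : ℂ) (n : ℕ) : ramThetaTerm (exp α) (exp β) n =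
      exp (α * (n * (n + 1) / 2) + β * (n * (n - 1) / 2)) := by
    rw [ramThetaTerm_natCast, ← exp_add, ← exp_nat_mul, ← exp_nat_mul, ← exp_add,
      Nat.cast_choose_two]
    ring_nf
  obtain ⟨m, rfl | rfl⟩ := n.eq_nat_or_neg
  · simpa using exp_natCast α β m
  · rw [ramThetaTerm_neg, exp_natCast]
    push_cast
    ring_nf

variable {a b c d : ℂ}

theorem summable_norm_ramThetaTerm_natCast (h : ‖a * b‖ < 1) :
    Summable fun n : ℕ ↦ ‖ramThetaTerm a b n‖ := by
  have hratio (n : ℕ) : ‖ramThetaTerm a b (n + 1 : ℕ)‖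
      = ‖a * b‖ ^ n * ‖a‖ * ‖ramThetaTerm a b n‖ := by
    simp only [ramThetaTerm_natCast, Nat.choose_succ_succ' n 1, Nat.choose_one_right,
      norm_mul, norm_pow]
    ring
  have hlim : Filter.Tendsto (fun n : ℕ ↦ ‖a * b‖ ^ n * ‖a‖) Filter.atTop (nhds 0) := by
    simpa using (tendsto_pow_atTop_nhds_zero_of_lt_one (norm_nonneg _) h).mul_const ‖a‖
  refine summable_of_ratio_norm_eventually_le (r := 1 / 2) (by norm_num) ?_
  filter_upwards [hlim.eventually_le_const (show (0 : ℝ) < 1 / 2 by norm_num)] with n hn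
  rw [norm_norm, norm_norm, hratio]
  gcongr

theorem summable_norm_ramThetaTerm (h : ‖a * b‖ < 1) :
    Summable fun n : ℤ ↦ ‖ramThetaTerm a b n‖ := by
  refine .of_nat_of_neg (summable_norm_ramThetaTerm_natCast h) ?_
  simpa only [ramThetaTerm_neg] using
    summable_norm_ramThetaTerm_natCast (a := b) (b := a) (by rwa [mul_comm])

theorem summable_ramThetaTerm_mul (h : ‖a * b‖ < 1) (h' : ‖c * d‖ < 1) :
    Summable fun p : ℤ × ℤ ↦ ramThetaTerm a b p.1 * ramThetaTerm c d p.2 :=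
  summable_mul_of_summable_norm (summable_norm_ramThetaTerm h) (summable_norm_ramThetaTerm h')

theorem ramTheta_mul_ramTheta_eq_tsum (h : ‖a * b‖ < 1) (h' : ‖c * d‖ < 1) :
    ramTheta a b * ramTheta c d
      = ∑' p : ℤ × ℤ, ramThetaTerm a b p.1 * ramThetaTerm c d p.2 :=
  tsum_mul_tsum_of_summable_norm (summable_norm_ramThetaTerm h) (summable_norm_ramThetaTerm h')

end Series

section Identities

variable {a b c d q : ℂ}

theorem ramTheta_comm (a b : ℂ) : ramTheta a b = ramTheta b a := by
  rw [ramTheta_eq_tsum, ramTheta_eq_tsum, ← (Equiv.neg ℤ).tsum_eq]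
  exact tsum_congr fun n ↦ ramThetaTerm_neg a b n

theorem bijective_two_mul_add :
    Function.Bijective fun p : Fin 2 × ℤ ↦ 2 * p.2 + ((p.1 : ℕ) : ℤ) := by
  constructor
  · rintro ⟨i, m⟩ ⟨j, n⟩ h
    simp only [Prod.mk.injEq, Fin.ext_iff] at h ⊢
    omega
  · intro n
    exact ⟨(⟨(n % 2).toNat, by omega⟩, n / 2), by dsimp only; omega⟩

theorem ramTheta_eq_even_add_odd (ha : a ≠ 0) (hb : b ≠ 0) (h : ‖a * b‖ < 1) :
    ramTheta a b
      = ramTheta (a ^ 3 * b) (a * b ^ 3) + a * ramTheta (b / a) (a ^ 5 * b ^ 3) := by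
  rw [ramTheta_comm (b / a)]
  have hs : Summable (ramThetaTerm a b) := (summable_norm_ramThetaTerm h).of_norm
  obtain ⟨α, rfl⟩ : ∃ α, exp α = a := ⟨_, exp_log ha⟩
  obtain ⟨β, rfl⟩ : ∃ β, exp β = b := ⟨_, exp_log hb⟩
  have heven (n : ℤ) : ramThetaTerm (exp α) (exp β) (2 * n)
      = ramThetaTerm (exp α ^ 3 * exp β) (exp α * exp β ^ 3) n := by
    simp only [← exp_nat_mul, ← exp_add, ramThetaTerm_exp]
    push_cast
    ring_nf
  have hodd (n : ℤ) : ramThetaTerm (exp α) (exp β) (2 * n + 1)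
      = exp α * ramThetaTerm (exp α ^ 5 * exp β ^ 3) (exp β / exp α) n := by
    simp only [← exp_nat_mul, ← exp_add, ← exp_sub, ramThetaTerm_exp]
    push_cast
    ring_nf
  rw [ramTheta_eq_tsum, tsum_eq_sum_tsum_of_bijective bijective_two_mul_add hs]
  simp [heven, hodd, tsum_mul_left, ramTheta_eq_tsum]

theorem ramTheta_one_left (hq : q ≠ 0) (h : ‖q‖ < 1) : ramTheta 1 q = 2 * psi q := by
  have := ramTheta_eq_even_add_odd one_ne_zero hq (by rwa [one_mul])
  simp only [one_pow, one_mul, div_one] at this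
  rw [this, psi, two_mul]

theorem bijective_add_sub :
    Function.Bijective fun p : Fin 2 × ℤ × ℤ ↦
      (p.2.1 + p.2.2 + ((p.1 : ℕ) : ℤ), p.2.1 - p.2.2) := by
  constructor
  · rintro ⟨i, x, y⟩ ⟨j, z, w⟩ h
    simp only [Prod.mk.injEq, Fin.ext_iff] at h ⊢
    omega
  · rintro ⟨m, n⟩
    refine ⟨(⟨((m - n) % 2).toNat, by omega⟩, n + (m - n) / 2, (m - n) / 2), ?_⟩
    simp only [Prod.mk.injEq]
    omega

theorem ramTheta_mul_ramTheta_of_mul_eq (hc : c ≠ 0) (hd : d ≠ 0) (hab : a * b = c * d)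
    (h : ‖a * b‖ < 1) :
    ramTheta a b * ramTheta c d
      = ramTheta (a * c) (b * d) * ramTheta (a * d) (b * c)
        + a * (ramTheta (b / c) (a * c ^ 2 * d) * ramTheta (b / d) (a * c * d ^ 2)) := by
  have ha : a ≠ 0 := left_ne_zero_of_mul (hab.trans_ne (mul_ne_zero hc hd))
  have hcd : ‖c * d‖ < 1 := hab ▸ h
  have hnome {x y : ℂ} (hxy : x * y = a * b * (c * d)) : ‖x * y‖ < 1 := by
    rw [hxy, norm_mul]
    exact mul_lt_one_of_nonneg_of_lt_one_left (norm_nonneg _) h hcd.le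
  rw [ramTheta_comm (b / c), ramTheta_comm (b / d), ramTheta_mul_ramTheta_eq_tsum h hcd,
    ramTheta_mul_ramTheta_eq_tsum (hnome (by ring)) (hnome (by ring)),
    ramTheta_mul_ramTheta_eq_tsum (hnome (by field_simp)) (hnome (by field_simp)),
    tsum_eq_sum_tsum_of_bijective bijective_add_sub (summable_ramThetaTerm_mul h hcd),
    Fin.sum_univ_two, ← tsum_mul_left]
  obtain ⟨α, rfl⟩ : ∃ α, exp α = a := ⟨_, exp_log ha⟩
  obtain ⟨γ, rfl⟩ : ∃ γ, exp γ = c := ⟨_, exp_log hc⟩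
  obtain ⟨δ, rfl⟩ : ∃ δ, exp δ = d := ⟨_, exp_log hd⟩
  obtain rfl : b = exp (γ + δ - α) := by
    rw [exp_sub, exp_add, ← hab, mul_div_cancel_left₀ _ ha]
  congr 1 <;> refine tsum_congr fun p ↦ ?_ <;>
  · simp only [Fin.val_zero, Fin.val_one, ← exp_nat_mul, ← exp_add, ← exp_sub, ramThetaTerm_exp]
    push_cast
    ring_nf

theorem ramTheta_mul_psi (h : ‖a * b‖ < 1) :
    ramTheta a b * psi (a * b) = ramTheta a (a * b ^ 2) * ramTheta b (a ^ 2 * b) := by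
  rcases eq_or_ne a 0 with rfl | ha
  · simp [psi, mul_comm, ramTheta_comm 0 b]
  rcases eq_or_ne b 0 with rfl | hb
  · simp [psi]
  have hnome : ‖a * (a * b ^ 2)‖ < 1 := by
    rw [show a * (a * b ^ 2) = (a * b) ^ 2 by ring]
    exact norm_pow_lt_one h two_ne_zero
  have hprod := ramTheta_mul_ramTheta_of_mul_eq (a := a) (b := a * b ^ 2) (c := b) (d := a ^ 2 * b)
    hb (mul_ne_zero (pow_ne_zero 2 ha) hb) (by ring) hnome
  have hb' : a * b ^ 2 / b = a * b := by field_simp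
  have hd' : a * b ^ 2 / (a ^ 2 * b) = b / a := by field_simp
  rw [hprod, hb', hd', ramTheta_eq_even_add_odd ha hb h, psi]
  ring_nf

/- In `ℤ[i]` the map is `(s + t i) ↦ (2 + i) (s + t i) + r`, where `r` runs through representatives
modulo `2 + i`. These representatives make every class in `ramTheta_one_left_sq` a product of two
theta series without a shift of the summation indices. -/
theorem bijective_gaussian_mul_add :
    Function.Bijective fun p : Fin 5 × ℤ × ℤ ↦
      (2 * p.2.1 - p.2.2 + ![0, 1, 0, 1, 2] p.1, p.2.1 + 2 * p.2.2 + ![0, 0, 1, 1, 0] p.1) := by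
  let residue (i : Fin 5) : ℤ := ![0, 1, 0, 1, 2] i - 2 * ![0, 0, 1, 1, 0] i
  have residue_inj : ∀ i j, 5 ∣ residue i - residue j → i = j := by decide
  have residue_surj (k : ℤ) : ∃ i, 5 ∣ k - residue i := by
    simp only [residue, Fin.exists_fin_succ, Matrix.cons_val_zero, Matrix.cons_val_succ,
      Matrix.cons_val_fin_one, exists_const]
    omega
  constructor
  · rintro ⟨i, s, t⟩ ⟨j, s', t'⟩ h
    obtain ⟨hre, him⟩ := Prod.mk.inj h
    dsimp only at hre him
    obtain rfl : i = j := residue_inj i j ⟨t - t', by dsimp only [residue]; linarith⟩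
    obtain rfl : s = s' := by linarith
    obtain rfl : t = t' := by linarith
    rfl
  · rintro ⟨m, n⟩
    obtain ⟨i, k, hk⟩ := residue_surj (m - 2 * n)
    dsimp only [residue] at hk
    refine ⟨(i, n - ![0, 0, 1, 1, 0] i + 2 * k, -k), Prod.ext ?_ ?_⟩ <;> dsimp only <;> linarith

theorem ramTheta_one_left_sq (hq : q ≠ 0) (h : ‖q‖ < 1) :
    ramTheta 1 q ^ 2 = 4 * (ramTheta q (q ^ 4) * ramTheta (q ^ 2) (q ^ 3))
      + q * ramTheta 1 (q ^ 5) ^ 2 := by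
  have hnome {x y : ℂ} (hxy : x * y = q ^ 5) : ‖x * y‖ < 1 :=
    hxy ▸ norm_pow_lt_one h (by simp)
  have h1q : ‖1 * q‖ < 1 := by rwa [one_mul]
  have hterm (s t : ℤ) :
      ramThetaTerm 1 q (2 * s - t) * ramThetaTerm 1 q (s + 2 * t)
        = ramThetaTerm q (q ^ 4) s * ramThetaTerm (q ^ 2) (q ^ 3) t ∧
      ramThetaTerm 1 q (2 * s - t + 1) * ramThetaTerm 1 q (s + 2 * t)
        = ramThetaTerm (q ^ 3) (q ^ 2) s * ramThetaTerm q (q ^ 4) t ∧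
      ramThetaTerm 1 q (2 * s - t) * ramThetaTerm 1 q (s + 2 * t + 1)
        = ramThetaTerm (q ^ 2) (q ^ 3) s * ramThetaTerm (q ^ 4) q t ∧
      ramThetaTerm 1 q (2 * s - t + 1) * ramThetaTerm 1 q (s + 2 * t + 1)
        = ramThetaTerm (q ^ 4) q s * ramThetaTerm (q ^ 3) (q ^ 2) t ∧
      ramThetaTerm 1 q (2 * s - t + 2) * ramThetaTerm 1 q (s + 2 * t)
        = q * (ramThetaTerm (q ^ 5) 1 s * ramThetaTerm 1 (q ^ 5) t) := by
    obtain ⟨ρ, rfl⟩ : ∃ ρ, exp ρ = q := ⟨_, exp_log hq⟩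
    rw [← exp_zero]
    refine ⟨?_, ?_, ?_, ?_, ?_⟩ <;>
    · simp only [← exp_nat_mul, ← exp_add, ramThetaTerm_exp]
      push_cast
      ring_nf
  rw [sq, ramTheta_mul_ramTheta_eq_tsum h1q h1q,
    tsum_eq_sum_tsum_of_bijective bijective_gaussian_mul_add (summable_ramThetaTerm_mul h1q h1q),
    Fin.sum_univ_five]
  simp only [Matrix.cons_val, add_zero, hterm, tsum_mul_left]
  rw [← ramTheta_mul_ramTheta_eq_tsum, ← ramTheta_mul_ramTheta_eq_tsum,
    ← ramTheta_mul_ramTheta_eq_tsum, ← ramTheta_mul_ramTheta_eq_tsum,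
    ← ramTheta_mul_ramTheta_eq_tsum]
  · rw [ramTheta_comm (q ^ 3), ramTheta_comm (q ^ 4), ramTheta_comm (q ^ 5)]
    ring
  all_goals exact hnome (by ring)

theorem psi_sq_sub (h : ‖q‖ < 1) :
    psi q ^ 2 - q * psi (q ^ 5) ^ 2 = ramTheta q (q ^ 4) * ramTheta (q ^ 2) (q ^ 3) := by
  rcases eq_or_ne q 0 with rfl | hq
  · simp [psi, sq]
  have hsq := ramTheta_one_left_sq hq h
  rw [ramTheta_one_left hq h,
    ramTheta_one_left (pow_ne_zero 5 hq) (norm_pow_lt_one h (by simp))] at hsq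
  linear_combination hsq / 4

end Identities

section Nonvanishing

variable {a b : ℂ}

theorem norm_tsum_ramThetaTerm_succ_le (ha : ‖a‖ ≤ 1) (h : ‖a * b‖ < 1) :
    ‖∑' n : ℕ, ramThetaTerm a b (n + 1 : ℕ)‖ ≤ ‖a‖ / (1 - ‖a * b‖) := by
  refine tsum_of_norm_bounded ((hasSum_geometric_of_lt_one (norm_nonneg _) h).mul_left ‖a‖)
    fun n ↦ ?_
  have hn : n ≤ (n + 1).choose 2 := by
    rw [Nat.choose_succ_succ' n 1, Nat.choose_one_right]
    exact Nat.le_add_right _ _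
  rw [ramThetaTerm_natCast, norm_mul, norm_pow, norm_pow, mul_comm]
  gcongr ?_ * ?_
  · exact pow_le_of_le_one (norm_nonneg _) ha n.succ_ne_zero
  · exact pow_le_pow_of_le_one (norm_nonneg _) h.le hn

theorem ramTheta_eq_one_add_tsum_add_tsum (h : ‖a * b‖ < 1) :
    ramTheta a b = 1 + ∑' n : ℕ, ramThetaTerm a b (n + 1 : ℕ)
      + ∑' n : ℕ, ramThetaTerm b a (n + 1 : ℕ) := by
  have hnonneg : Summable fun n : ℕ ↦ ramThetaTerm a b n :=
    (summable_norm_ramThetaTerm_natCast h).of_norm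
  have hneg : Summable fun n : ℕ ↦ ramThetaTerm a b (-(n + 1 : ℤ)) :=
    (summable_norm_ramThetaTerm h).of_norm.comp_injective fun m n hmn ↦ by simpa using hmn
  have hzero : ramThetaTerm a b (0 : ℕ) = 1 := by simp [ramThetaTerm]
  rw [ramTheta_eq_tsum, tsum_of_nat_of_neg_add_one hnonneg hneg, hnonneg.tsum_eq_zero_add]
  simp only [ramThetaTerm_neg, hzero, Nat.cast_add_one]

theorem norm_ramTheta_sub_one_le (ha : ‖a‖ ≤ 1) (hb : ‖b‖ ≤ 1) (h : ‖a * b‖ < 1) :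
    ‖ramTheta a b - 1‖ ≤ (‖a‖ + ‖b‖) / (1 - ‖a * b‖) := by
  rw [ramTheta_eq_one_add_tsum_add_tsum h, add_assoc, add_sub_cancel_left, add_div]
  refine norm_add_le_of_le (norm_tsum_ramThetaTerm_succ_le ha h) ?_
  rw [mul_comm a]
  exact norm_tsum_ramThetaTerm_succ_le hb (by rwa [mul_comm])

theorem ramTheta_ne_zero_of_norm_add_lt_one (h : ‖a‖ + ‖b‖ + ‖a * b‖ < 1) :
    ramTheta a b ≠ 0 := by
  intro hzero
  have := norm_nonneg a
  have := norm_nonneg b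
  have := norm_nonneg (a * b)
  have hle := norm_ramTheta_sub_one_le (a := a) (b := b) (by linarith) (by linarith) (by linarith)
  rw [hzero, zero_sub, norm_neg, norm_one, one_le_div (by linarith)] at hle
  linarith

theorem exists_ramTheta_eq_zero_of_norm_le {c : ℝ} (hc : c < 1) (ha : ‖a‖ ≤ c) (hb : ‖b‖ ≤ c)
    (hzero : ramTheta a b = 0) (N : ℕ) :
    ∃ a' b', ‖a'‖ ≤ c ∧ ‖b'‖ ≤ c ^ (N + 1) ∧ ramTheta a' b' = 0 := by
  induction N with
  | zero => exact ⟨a, b, ha, by simpa using hb, hzero⟩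
  | succ N ih =>
    obtain ⟨x, y, hx, hy, hxy⟩ := ih
    have hc0 : 0 ≤ c := (norm_nonneg a).trans ha
    have hpow : c ^ (N + 1) ≤ c := pow_le_of_le_one hc0 hc.le N.succ_ne_zero
    have hnome : ‖x * y‖ ≤ c ^ (N + 2) := by
      rw [norm_mul, pow_succ']
      gcongr
    have hnome_lt : ‖x * y‖ < 1 := hnome.trans_lt (pow_lt_one₀ hc0 hc (by omega))
    have hprod := ramTheta_mul_psi hnome_lt
    rw [hxy, zero_mul, eq_comm, mul_eq_zero] at hprod
    rcases hprod with hleft | hright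
    · refine ⟨x, x * y ^ 2, hx, ?_, hleft⟩
      rw [show x * y ^ 2 = x * y * y by ring, norm_mul]
      exact (mul_le_of_le_one_right (norm_nonneg _) (by linarith)).trans hnome
    · refine ⟨y, x ^ 2 * y, hy.trans hpow, ?_, hright⟩
      rw [show x ^ 2 * y = x * y * x by ring, norm_mul]
      exact (mul_le_of_le_one_right (norm_nonneg _) (by linarith)).trans hnome

theorem ramTheta_ne_zero (ha : ‖a‖ < 1) (hb : ‖b‖ < 1) : ramTheta a b ≠ 0 := by
  intro hzero
  obtain ⟨c, hc, hc1⟩ := exists_between (max_lt ha hb)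
  obtain ⟨hca, hcb⟩ := max_lt_iff.mp hc
  have hc0 : 0 ≤ c := (norm_nonneg a).trans hca.le
  obtain ⟨N, hN⟩ := exists_pow_lt_of_lt_one (show 0 < (1 - c) / 2 by linarith) hc1
  obtain ⟨x, y, hx, hy, hxy⟩ := exists_ramTheta_eq_zero_of_norm_le hc1 hca.le hcb.le hzero N
  refine ramTheta_ne_zero_of_norm_add_lt_one ?_ hxy
  have hyN : ‖y‖ ≤ c ^ N := hy.trans (pow_le_pow_of_le_one hc0 hc1.le N.le_succ)
  have hxy' : ‖x * y‖ ≤ ‖y‖ := by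
    rw [norm_mul]
    exact mul_le_of_le_one_left (norm_nonneg _) (by linarith)
  linarith

theorem psi_ne_zero {q : ℂ} (h : ‖q‖ < 1) : psi q ≠ 0 :=
  ramTheta_ne_zero h (norm_pow_lt_one h three_ne_zero)

end Nonvanishing

section Quintic

variable {q : ℂ}

theorem ramTheta_mul_sub_ramTheta_mul (h : ‖q‖ < 1) :
    ramTheta (q ^ 4) (q ^ 6) * ramTheta (-q ^ 3) (-q ^ 7)
        - q * ramTheta (q ^ 2) (q ^ 8) * ramTheta (-q) (-q ^ 9)
      = ramTheta (-q) (q ^ 4) * ramTheta (q ^ 2) (-q ^ 3) := by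
  rcases eq_or_ne q 0 with rfl | hq
  · simp
  have hnome : ‖-q * q ^ 4‖ < 1 := by
    rw [show -q * q ^ 4 = -q ^ 5 by ring]
    exact norm_neg_pow_lt_one h (by simp)
  have hprod := ramTheta_mul_ramTheta_of_mul_eq (a := -q) (b := q ^ 4) (c := q ^ 2) (d := -q ^ 3)
    (pow_ne_zero 2 hq) (neg_ne_zero.mpr (pow_ne_zero 3 hq)) (by ring) hnome
  have hc : q ^ 4 / q ^ 2 = q ^ 2 := by field_simp
  have hd : q ^ 4 / -q ^ 3 = -q := by field_simp
  rw [hc, hd] at hprod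
  ring_nf at hprod ⊢
  linear_combination -hprod

theorem ramTheta_neg_mul_psi (h : ‖q‖ < 1) :
    ramTheta (-q) (q ^ 4) * psi (-q ^ 5) = ramTheta (-q) (-q ^ 9) * ramTheta (q ^ 4) (q ^ 6) := by
  have hmul : -q * q ^ 4 = -q ^ 5 := by ring
  have := ramTheta_mul_psi (hmul ▸ norm_neg_pow_lt_one h (by simp))
  ring_nf at this ⊢
  exact this

theorem ramTheta_sq_mul_psi (h : ‖q‖ < 1) :
    ramTheta (q ^ 2) (-q ^ 3) * psi (-q ^ 5)
      = ramTheta (q ^ 2) (q ^ 8) * ramTheta (-q ^ 3) (-q ^ 7) := by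
  have hmul : q ^ 2 * -q ^ 3 = -q ^ 5 := by ring
  have := ramTheta_mul_psi (hmul ▸ norm_neg_pow_lt_one h (by simp))
  ring_nf at this ⊢
  exact this

end Quintic

theorem stmt8_general (q : ℂ) (h : ‖q‖ < 1) :
    ramTheta (q ^ 4) (q ^ 6) / ramTheta (-q) (-q ^ 9)
        - q * ramTheta (q ^ 2) (q ^ 8) / ramTheta (-q ^ 3) (-q ^ 7)
      = (psi (q ^ 2) ^ 2 - q ^ 2 * psi (q ^ 10) ^ 2) / psi (-q ^ 5) ^ 2 := by
  have hneg {k : ℕ} (hk : k ≠ 0) : ‖-q ^ k‖ < 1 := norm_neg_pow_lt_one h hk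
  have hden₁ : ramTheta (-q) (-q ^ 9) ≠ 0 := ramTheta_ne_zero (by rwa [norm_neg]) (hneg (by simp))
  have hden₂ : ramTheta (-q ^ 3) (-q ^ 7) ≠ 0 := ramTheta_ne_zero (hneg (by simp)) (hneg (by simp))
  have hpsi : psi (-q ^ 5) ≠ 0 := psi_ne_zero (hneg (by simp))
  have hnum : psi (q ^ 2) ^ 2 - q ^ 2 * psi (q ^ 10) ^ 2
      = ramTheta (q ^ 2) (q ^ 8) * ramTheta (q ^ 4) (q ^ 6) := by
    simpa only [← pow_mul] using psi_sq_sub (norm_pow_lt_one h two_ne_zero)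
  rw [hnum, div_sub_div _ _ hden₁ hden₂,
    div_eq_div_iff (mul_ne_zero hden₁ hden₂) (pow_ne_zero 2 hpsi)]
  linear_combination psi (-q ^ 5) ^ 2 * ramTheta_mul_sub_ramTheta_mul h
    + ramTheta (q ^ 2) (-q ^ 3) * psi (-q ^ 5) * ramTheta_neg_mul_psi h
    + ramTheta (-q) (-q ^ 9) * ramTheta (q ^ 4) (q ^ 6) * ramTheta_sq_mul_psi h

theorem stmt8 (q : ℝ) (hq0 : 0 < q) (hq1 : q < 1) :
    Omega1 q - Omega2 q
      = (psi ((q : ℂ) ^ 2) ^ 2 - (q : ℂ) ^ 2 * psi ((q : ℂ) ^ 10) ^ 2)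
        / psi (-(q : ℂ) ^ 5) ^ 2 := by
  have h : ‖(q : ℂ)‖ < 1 := by rwa [norm_real, Real.norm_of_nonneg hq0.le]
  exact stmt8_general q h
end

section
/- Let q be a real number with 0 < q < 1. Then Γ₁·Γ₂ = ψ(q)·ψ(−q⁵) / (ψ(−q)·ψ(q⁵)). -/
noncomputable def Gamma1 (q : ℝ) : ℂ :=
  ramTheta (q : ℂ) ((q : ℂ) ^ 9) / ramTheta (-(q : ℂ)) (-(q : ℂ) ^ 9)

noncomputable def Gamma2 (q : ℝ) : ℂ :=
  ramTheta ((q : ℂ) ^ 3) ((q : ℂ) ^ 7) / ramTheta (-(q : ℂ) ^ 3) (-(q : ℂ) ^ 7)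

/-!
By Jacobi's triple product `f(a,b) = (-a;ab)_∞ (-b;ab)_∞ (ab;ab)_∞`, splitting `(-q;q²)_∞` into
residue classes modulo 2 and modulo 5 turns both `ψ(q)` and `f(q,q⁹) f(q³,q⁷) (-q⁵;q¹⁰)_∞` into
`(-q;q²)_∞` times a product in even powers of `q`. Hence `f(q,q⁹) f(q³,q⁷) = κ(q) ψ(q) / ψ(q⁵)` with
`κ` even, and dividing this by its instance at `-q` cancels `κ`.

The triple product itself is the limit of its finite form
`(-a;ab)_m (-b;ab)_n = ∑ [m+n choose n+j] a^(j(j+1)/2) b^(j(j-1)/2)`, which holds without inverting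
`a` or `b`, so no case distinction at zero arises.
-/

open Filter Topology Finset

section QPoch

variable {R : Type*} [CommRing R]

/-- The finite `q`-Pochhammer symbol `(a;q)_n`, whose limit is `qPochInf a q`. -/
def qPoch (a q : R) (n : ℕ) : R :=
  ∏ k ∈ range n, (1 - a * q ^ k)

theorem qPoch_zero (a q : R) : qPoch a q 0 = 1 :=
  prod_range_zero _

theorem qPoch_succ (a q : R) (n : ℕ) :
    qPoch a q (n + 1) = qPoch a q n * (1 - a * q ^ n) :=
  prod_range_succ _ _

theorem qPoch_mul_eq_prod (a q : R) (d n : ℕ) :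
    qPoch a q (d * n) = ∏ i ∈ range d, qPoch (a * q ^ i) (q ^ d) n := by
  induction n with
  | zero => simp only [mul_zero, qPoch_zero, prod_const_one]
  | succ n ih =>
    rw [mul_add_one, qPoch, prod_range_add, ← qPoch, ih]
    simp only [qPoch_succ, prod_mul_distrib]
    congr 1
    exact prod_congr rfl fun i _ => by ring

end QPoch

section GaussBinom

variable {K : Type*} [Field K] {q : K}

/-- The Gaussian binomial coefficient `[i + j choose i]_q`, indexed by `i` and `j` so that its
symmetry is visible. It is meaningful only if `(q;q)_n ≠ 0` for all `n`. -/
def gaussBinom (q : K) (i j : ℕ) : K :=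
  qPoch q q (i + j) / (qPoch q q i * qPoch q q j)

theorem gaussBinom_comm (q : K) (i j : ℕ) : gaussBinom q i j = gaussBinom q j i := by
  rw [gaussBinom, gaussBinom, add_comm, mul_comm (qPoch q q i)]

theorem one_sub_pow_succ_ne_zero (hq : ∀ n, qPoch q q n ≠ 0) (n : ℕ) : 1 - q ^ (n + 1) ≠ 0 := by
  rw [pow_succ']
  exact right_ne_zero_of_mul (qPoch_succ q q n ▸ hq (n + 1))

theorem gaussBinom_succ_left_mul (hq : ∀ n, qPoch q q n ≠ 0) (i j : ℕ) :
    gaussBinom q (i + 1) j * (1 - q ^ (i + 1)) = gaussBinom q i j * (1 - q ^ (i + j + 1)) := by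
  have hpow := one_sub_pow_succ_ne_zero hq i
  simp only [gaussBinom, add_right_comm i 1 j, qPoch_succ, ← pow_succ']
  field_simp [hq i, hq j]

theorem gaussBinom_succ_right_mul (hq : ∀ n, qPoch q q n ≠ 0) (i j : ℕ) :
    gaussBinom q i (j + 1) * (1 - q ^ (j + 1)) = gaussBinom q i j * (1 - q ^ (i + j + 1)) := by
  rw [gaussBinom_comm, gaussBinom_succ_left_mul hq, gaussBinom_comm, add_comm j i]

-- Pascal's rule, summed against `f`: weighting both sides by `1 - q ^ (N + 1)` and splitting it as
-- `(1 - q ^ j) + q ^ j * (1 - q ^ i)` makes the boundary terms vanish.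
theorem sum_antidiagonal_succ_gaussBinom_mul (hq : ∀ n, qPoch q q n ≠ 0) (f : ℕ → K) (N : ℕ) :
    ∑ p ∈ antidiagonal (N + 1), gaussBinom q p.1 p.2 * f p.1 =
      ∑ p ∈ antidiagonal N, gaussBinom q p.1 p.2 * (f p.1 + q ^ p.2 * f (p.1 + 1)) := by
  have hsplit : ∑ p ∈ antidiagonal (N + 1), gaussBinom q p.1 p.2 * f p.1 * (1 - q ^ (N + 1)) =
      ∑ p ∈ antidiagonal (N + 1), gaussBinom q p.1 p.2 * (1 - q ^ p.2) * f p.1 +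
      ∑ p ∈ antidiagonal (N + 1), gaussBinom q p.1 p.2 * (1 - q ^ p.1) * (q ^ p.2 * f p.1) := by
    rw [← sum_add_distrib]
    refine sum_congr rfl fun p hp => ?_
    rw [← mem_antidiagonal.1 hp]
    ring
  refine mul_right_cancel₀ (one_sub_pow_succ_ne_zero hq N) ?_
  rw [sum_mul, hsplit, Nat.sum_antidiagonal_succ', Nat.sum_antidiagonal_succ]
  simp only [pow_zero, sub_self, mul_zero, zero_mul, zero_add, gaussBinom_succ_left_mul hq,
    gaussBinom_succ_right_mul hq]
  rw [← sum_add_distrib, sum_mul]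
  refine sum_congr rfl fun p hp => ?_
  rw [mem_antidiagonal.1 hp]
  ring

end GaussBinom

section ThetaTerm

variable {R : Type*} [CommSemiring R]

/-- The `n`-th term of the series defining `ramTheta a b`. -/
def thetaTerm (a b : R) (n : ℤ) : R :=
  a ^ ((n * (n + 1)) / 2).toNat * b ^ ((n * (n - 1)) / 2).toNat

theorem thetaTerm_zero (a b : R) : thetaTerm a b 0 = 1 := by
  simp [thetaTerm]

theorem thetaTerm_neg (a b : R) (n : ℤ) : thetaTerm a b (-n) = thetaTerm b a n := by
  rw [thetaTerm, thetaTerm, mul_comm]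
  ring_nf

theorem two_mul_toNat_mul_add_one_div_two (n : ℤ) :
    2 * ((n * (n + 1) / 2).toNat : ℤ) = n * (n + 1) := by
  have hdvd : 2 ∣ n * (n + 1) := (Int.even_mul_succ_self n).two_dvd
  have hnonneg : 0 ≤ n * (n + 1) := by
    rcases le_or_gt 0 n with h | h <;> nlinarith
  lia

theorem two_mul_toNat_mul_sub_one_div_two (n : ℤ) :
    2 * ((n * (n - 1) / 2).toNat : ℤ) = n * (n - 1) := by
  have h := two_mul_toNat_mul_add_one_div_two (n - 1)
  rwa [sub_add_cancel, mul_comm (n - 1)] at h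

theorem mul_pow_mul_thetaTerm (a b : R) {m r : ℕ} {n : ℤ} (h : n + r = m) :
    a * (a * b) ^ m * thetaTerm a b n = (a * b) ^ r * thetaTerm a b (n + 1) := by
  have ha₀ := two_mul_toNat_mul_add_one_div_two n
  have hb₀ := two_mul_toNat_mul_sub_one_div_two n
  have ha₁ := two_mul_toNat_mul_add_one_div_two (n + 1)
  have hb₁ := two_mul_toNat_mul_sub_one_div_two (n + 1)
  simp only [thetaTerm]
  set A₀ := (n * (n + 1) / 2).toNat
  set B₀ := (n * (n - 1) / 2).toNat
  set A₁ := ((n + 1) * (n + 1 + 1) / 2).toNat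
  set B₁ := ((n + 1) * (n + 1 - 1) / 2).toNat
  have hA : 1 + m + A₀ = r + A₁ := by zify; linarith
  have hB : m + B₀ = r + B₁ := by zify; linarith
  calc a * (a * b) ^ m * (a ^ A₀ * b ^ B₀) = a ^ (1 + m + A₀) * b ^ (m + B₀) := by ring
    _ = (a * b) ^ r * (a ^ A₁ * b ^ B₁) := by rw [hA, hB]; ring

theorem thetaTerm_natCast (a b : R) (k : ℕ) :
    thetaTerm a b k = (a * b) ^ k.choose 2 * a ^ k := by
  induction k with
  | zero => simp [thetaTerm]
  | succ k ih =>
    have h := mul_pow_mul_thetaTerm a b (m := k) (r := 0) (n := k) (by simp)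
    rw [pow_zero, one_mul] at h
    rw [Nat.cast_succ, ← h, ih, Nat.choose_succ_succ' k 1, Nat.choose_one_right]
    ring

end ThetaTerm

section FiniteTripleProduct

variable {K : Type*} [Field K]

theorem sum_gaussBinom_mul_thetaTerm_succ {a b : K} (hab : ∀ n, qPoch (a * b) (a * b) n ≠ 0)
    (m n : ℕ) :
    ∑ p ∈ antidiagonal (m + 1 + n), gaussBinom (a * b) p.1 p.2 * thetaTerm a b (p.1 - n) =
      (1 - -a * (a * b) ^ m) *
        ∑ p ∈ antidiagonal (m + n), gaussBinom (a * b) p.1 p.2 * thetaTerm a b (p.1 - n) := by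
  rw [add_right_comm, sum_antidiagonal_succ_gaussBinom_mul hab (fun i => thetaTerm a b (i - n)),
    mul_sum]
  refine sum_congr rfl fun p hp => ?_
  have hshift := mul_pow_mul_thetaTerm a b (m := m) (r := p.2) (n := p.1 - n)
    (by have := mem_antidiagonal.1 hp; lia)
  rw [Nat.cast_succ, add_sub_right_comm, ← hshift]
  ring

theorem sum_gaussBinom_mul_thetaTerm_comm (a b : K) (m n : ℕ) :
    ∑ p ∈ antidiagonal (m + n), gaussBinom (a * b) p.1 p.2 * thetaTerm a b (p.1 - n) =
      ∑ p ∈ antidiagonal (n + m), gaussBinom (b * a) p.1 p.2 * thetaTerm b a (p.1 - m) := by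
  rw [add_comm n m, ← Nat.sum_antidiagonal_swap]
  refine sum_congr rfl fun p hp => ?_
  have hindex : (p.2 : ℤ) - n = -(p.1 - m) := by
    have := mem_antidiagonal.1 hp
    lia
  rw [Prod.fst_swap, Prod.snd_swap, hindex, thetaTerm_neg, gaussBinom_comm, mul_comm a b]

theorem sum_gaussBinom_mul_thetaTerm {a b : K} (hab : ∀ n, qPoch (a * b) (a * b) n ≠ 0)
    (m n : ℕ) :
    ∑ p ∈ antidiagonal (m + n), gaussBinom (a * b) p.1 p.2 * thetaTerm a b (p.1 - n) =
      qPoch (-a) (a * b) m * qPoch (-b) (a * b) n := by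
  induction m with
  | succ m ih => rw [sum_gaussBinom_mul_thetaTerm_succ hab, ih, qPoch_succ]; ring
  | zero =>
    rw [sum_gaussBinom_mul_thetaTerm_comm, mul_comm a b]
    rw [mul_comm a b] at hab
    induction n with
    | succ n ih => rw [sum_gaussBinom_mul_thetaTerm_succ hab, ih, qPoch_succ]; ring
    | zero => simp [gaussBinom, qPoch, thetaTerm_zero]

end FiniteTripleProduct

theorem sum_antidiagonal_add_eq_sum_Icc {M : Type*} [AddCommMonoid M] (f : ℕ → ℕ → ℤ → M)
    (m n : ℕ) :
    ∑ p ∈ antidiagonal (m + n), f p.1 p.2 (p.1 - n) =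
      ∑ j ∈ Icc (-n : ℤ) m, f (n + j).toNat (m - j).toNat j := by
  refine sum_nbij' (fun p => (p.1 : ℤ) - n) (fun j => ((n + j).toNat, (m - j).toNat)) ?_ ?_ ?_ ?_ ?_
  · intro p hp
    simp only [HasAntidiagonal.mem_antidiagonal, mem_Icc] at hp ⊢
    lia
  · intro j hj
    simp only [HasAntidiagonal.mem_antidiagonal, mem_Icc] at hj ⊢
    lia
  · intro p hp
    simp only [HasAntidiagonal.mem_antidiagonal] at hp
    ext <;> simp only <;> lia
  · intro j hj
    simp only [mem_Icc] at hj
    lia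
  · intro p hp
    simp only [HasAntidiagonal.mem_antidiagonal] at hp
    congr <;> lia

section NormedField

variable {𝕜 : Type*} [NormedField 𝕜] {a b q : 𝕜}

theorem norm_pow_lt_one_s9 (hq : ‖q‖ < 1) {n : ℕ} (hn : n ≠ 0) : ‖q ^ n‖ < 1 :=
  norm_pow q n ▸ pow_lt_one₀ (norm_nonneg q) hq hn

theorem qPoch_ne_zero (ha : ‖a‖ < 1) (hq : ‖q‖ ≤ 1) (n : ℕ) : qPoch a q n ≠ 0 := by
  refine prod_ne_zero_iff.2 fun k _ h => ?_
  have hlt : ‖a * q ^ k‖ < 1 := by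
    rw [norm_mul, norm_pow]
    exact mul_lt_one_of_nonneg_of_lt_one_left (norm_nonneg a) ha (pow_le_one₀ (norm_nonneg q) hq)
  rw [← sub_eq_zero.1 h, norm_one] at hlt
  exact hlt.false

theorem summable_norm_pow_choose_two_mul_pow (hq : ‖q‖ < 1) (x : 𝕜) :
    Summable fun k : ℕ => ‖q ^ k.choose 2 * x ^ k‖ := by
  have hratio : Tendsto (fun k : ℕ => ‖q‖ ^ k * ‖x‖) atTop (𝓝 0) := by
    simpa using (tendsto_pow_atTop_nhds_zero_of_lt_one (norm_nonneg q) hq).mul_const ‖x‖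
  refine summable_of_ratio_norm_eventually_le one_half_lt_one ?_
  filter_upwards [hratio.eventually_le_const one_half_pos] with k hk
  have hstep : q ^ (k + 1).choose 2 * x ^ (k + 1) = q ^ k * x * (q ^ k.choose 2 * x ^ k) := by
    rw [Nat.choose_succ_succ' k 1, Nat.choose_one_right]
    ring
  rw [norm_norm, norm_norm, hstep, norm_mul, norm_mul (q ^ k), norm_pow]
  exact mul_le_mul_of_nonneg_right hk (norm_nonneg _)

theorem summable_norm_thetaTerm (hab : ‖a * b‖ < 1) :
    Summable fun n : ℤ => ‖thetaTerm a b n‖ := by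
  refine Summable.of_nat_of_neg ?_ ?_
  · simpa only [thetaTerm_natCast] using summable_norm_pow_choose_two_mul_pow hab a
  · simpa only [thetaTerm_neg, thetaTerm_natCast, mul_comm b a] using
      summable_norm_pow_choose_two_mul_pow hab b

end NormedField

section InfiniteProduct

variable {a b q : ℂ}

theorem summable_norm_neg_mul_pow (a : ℂ) (hq : ‖q‖ < 1) :
    Summable fun k : ℕ => ‖-(a * q ^ k)‖ := by
  simpa only [norm_neg, norm_mul, norm_pow] using
    (summable_geometric_of_lt_one (norm_nonneg q) hq).mul_left ‖a‖

theorem tendsto_qPoch (a : ℂ) (hq : ‖q‖ < 1) :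
    Tendsto (qPoch a q) atTop (𝓝 (qPochInf a q)) := by
  have h := (multipliable_one_add_of_summable (summable_norm_neg_mul_pow a hq)).hasProd
  simp only [← sub_eq_add_neg] at h
  exact h.tendsto_prod_nat

theorem qPochInf_ne_zero (ha : ‖a‖ < 1) (hq : ‖q‖ < 1) : qPochInf a q ≠ 0 := by
  simp only [qPochInf, sub_eq_add_neg]
  refine tprod_one_add_ne_zero_of_summable (fun k => ?_) (summable_norm_neg_mul_pow a hq)
  have h := qPoch_ne_zero ha hq.le (k + 1)
  rw [qPoch_succ] at h
  exact sub_eq_add_neg (1 : ℂ) _ ▸ right_ne_zero_of_mul h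

theorem qPochInf_pow_self_ne_zero (hq : ‖q‖ < 1) {n : ℕ} (hn : n ≠ 0) :
    qPochInf (q ^ n) (q ^ n) ≠ 0 :=
  qPochInf_ne_zero (norm_pow_lt_one_s9 hq hn) (norm_pow_lt_one_s9 hq hn)

theorem qPochInf_eq_prod (a : ℂ) (hq : ‖q‖ < 1) {d : ℕ} (hd : d ≠ 0) :
    qPochInf a q = ∏ i ∈ range d, qPochInf (a * q ^ i) (q ^ d) := by
  have hlim := tendsto_finsetProd (range d) fun i _ =>
    tendsto_qPoch (a * q ^ i) (norm_pow_lt_one_s9 hq hd)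
  simp only [← qPoch_mul_eq_prod] at hlim
  exact tendsto_nhds_unique
    ((tendsto_qPoch a hq).comp (tendsto_id.const_mul_atTop' hd.bot_lt)) hlim

theorem tendsto_gaussBinom (hq : ‖q‖ < 1) {ι : Type*} {l : Filter ι} {u v : ι → ℕ}
    (hu : Tendsto u l atTop) (hv : Tendsto v l atTop) :
    Tendsto (fun t => gaussBinom q (u t) (v t)) l (𝓝 (qPochInf q q)⁻¹) := by
  have hlim := tendsto_qPoch q hq
  have hne := qPochInf_ne_zero hq hq
  have h := (hlim.comp (hu.atTop_add_atTop hv)).div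
    ((hlim.comp hu).mul (hlim.comp hv)) (mul_ne_zero hne hne)
  rwa [div_mul_cancel_left₀ hne] at h

theorem exists_norm_gaussBinom_le (hq : ‖q‖ < 1) : ∃ C, ∀ i j, ‖gaussBinom q i j‖ ≤ C := by
  have hlim := tendsto_qPoch q hq
  obtain ⟨C, hC⟩ := (Metric.isBounded_range_of_tendsto _ hlim).exists_norm_le
  obtain ⟨D, hD⟩ := (Metric.isBounded_range_of_tendsto _
    (hlim.inv₀ (qPochInf_ne_zero hq hq))).exists_norm_le
  simp only [Set.forall_mem_range] at hC hD
  refine ⟨C * (D * D), fun i j => ?_⟩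
  have hC0 : 0 ≤ C := (norm_nonneg _).trans (hC 0)
  have hD0 : 0 ≤ D := (norm_nonneg _).trans (hD 0)
  rw [gaussBinom, div_eq_mul_inv, mul_inv, norm_mul, norm_mul]
  gcongr
  exacts [hC _, hD _, hD _]

theorem tendsto_sum_gaussBinom_mul_thetaTerm (hab : ‖a * b‖ < 1) :
    Tendsto (fun n : ℕ => ∑ j ∈ Icc (-n : ℤ) n,
        gaussBinom (a * b) (n + j).toNat (n - j).toNat * thetaTerm a b j)
      atTop (𝓝 ((qPochInf (a * b) (a * b))⁻¹ * ramTheta a b)) := by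
  obtain ⟨C, hC⟩ := exists_norm_gaussBinom_le hab
  rw [ramTheta, ← tsum_mul_left]
  refine Tendsto.congr (fun n => (sum_eq_tsum_indicator _ _).symm) ?_
  refine tendsto_tsum_of_dominated_convergence ((summable_norm_thetaTerm hab).mul_left C)
    (fun j => ?_) (Eventually.of_forall fun n j => (norm_indicator_le_norm_self _ _).trans ?_)
  · have hmem : ∀ᶠ n : ℕ in atTop, j ∈ (Icc (-n : ℤ) n : Set ℤ) := by
      filter_upwards [eventually_ge_atTop j.natAbs] with n hn
      simp only [coe_Icc, Set.mem_Icc]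
      lia
    have hadd (i : ℤ) : Tendsto (fun n : ℕ => (n + i).toNat) atTop atTop :=
      tendsto_atTop.2 fun c => by
        filter_upwards [eventually_ge_atTop (c + i.natAbs)] with n hn
        lia
    refine ((tendsto_gaussBinom hab (hadd j) (hadd (-j))).mul_const (thetaTerm a b j)).congr' ?_
    filter_upwards [hmem] with n hn
    rw [Set.indicator_of_mem hn, ← sub_eq_add_neg]
  · rw [norm_mul]
    exact mul_le_mul_of_nonneg_right (hC _ _) (norm_nonneg _)

theorem ramTheta_eq_qPochInf (hab : ‖a * b‖ < 1) :
    ramTheta a b =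
      qPochInf (-a) (a * b) * qPochInf (-b) (a * b) * qPochInf (a * b) (a * b) := by
  have hlim := tendsto_sum_gaussBinom_mul_thetaTerm hab
  simp only [← sum_antidiagonal_add_eq_sum_Icc
    (fun i j k => gaussBinom (a * b) i j * thetaTerm a b k),
    sum_gaussBinom_mul_thetaTerm (qPoch_ne_zero hab hab.le)] at hlim
  rw [tendsto_nhds_unique ((tendsto_qPoch (-a) hab).mul (tendsto_qPoch (-b) hab)) hlim,
    mul_comm, mul_inv_cancel_left₀ (qPochInf_ne_zero hab hab)]

theorem psi_eq_qPochInf (hq : ‖q‖ < 1) :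
    psi q = qPochInf (-q) (q ^ 2) * qPochInf (q ^ 4) (q ^ 4) := by
  have hdissect := qPochInf_eq_prod (-q) (norm_pow_lt_one_s9 hq two_ne_zero) two_ne_zero
  have htriple := ramTheta_eq_qPochInf (a := q) (b := q ^ 3)
    (by simpa only [← pow_succ'] using norm_pow_lt_one_s9 hq four_ne_zero)
  rw [psi, htriple, hdissect]
  simp only [prod_range_succ, prod_range_zero]
  ring_nf

theorem ramTheta_mul_ramTheta_mul_qPochInf (hq : ‖q‖ < 1) :
    ramTheta q (q ^ 9) * ramTheta (q ^ 3) (q ^ 7) * qPochInf (-q ^ 5) (q ^ 10) =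
      qPochInf (-q) (q ^ 2) * qPochInf (q ^ 10) (q ^ 10) ^ 2 := by
  have hq10 : ‖q ^ 10‖ < 1 := norm_pow_lt_one_s9 hq (by norm_num)
  have hdissect := qPochInf_eq_prod (-q) (norm_pow_lt_one_s9 hq two_ne_zero) (d := 5) (by norm_num)
  rw [hdissect, ramTheta_eq_qPochInf (a := q) (b := q ^ 9) (by simpa only [← pow_succ'] using hq10),
    ramTheta_eq_qPochInf (a := q ^ 3) (b := q ^ 7) (by simpa only [← pow_add] using hq10)]
  simp only [prod_range_succ, prod_range_zero]
  ring_nf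

theorem ramTheta_mul_ramTheta_eq_mul_psi_div_psi (hq : ‖q‖ < 1) :
    ramTheta q (q ^ 9) * ramTheta (q ^ 3) (q ^ 7) =
      qPochInf (q ^ 10) (q ^ 10) ^ 2 * qPochInf (q ^ 20) (q ^ 20) / qPochInf (q ^ 4) (q ^ 4) *
        (psi q / psi (q ^ 5)) := by
  have hq5 : ‖q ^ 5‖ < 1 := norm_pow_lt_one_s9 hq (by simp)
  have h4 := qPochInf_pow_self_ne_zero hq (n := 4) (by simp)
  have h20 := qPochInf_pow_self_ne_zero hq (n := 20) (by simp)
  have h510 : qPochInf (-q ^ 5) (q ^ 10) ≠ 0 :=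
    qPochInf_ne_zero (by rwa [norm_neg]) (norm_pow_lt_one_s9 hq (by simp))
  have hpsi5 := psi_eq_qPochInf hq5
  simp only [← pow_mul, Nat.reduceMul] at hpsi5
  rw [eq_div_of_mul_eq h510 (ramTheta_mul_ramTheta_mul_qPochInf hq), psi_eq_qPochInf hq, hpsi5]
  field_simp

end InfiniteProduct

theorem stmt9_general (q : ℂ) (hq : ‖q‖ < 1) :
    ramTheta q (q ^ 9) / ramTheta (-q) (-q ^ 9) *
        (ramTheta (q ^ 3) (q ^ 7) / ramTheta (-q ^ 3) (-q ^ 7)) =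
      psi q * psi (-q ^ 5) / (psi (-q) * psi (q ^ 5)) := by
  have hne {n : ℕ} (hn : n ≠ 0) := qPochInf_pow_self_ne_zero hq hn
  have hfactor : qPochInf (q ^ 10) (q ^ 10) ^ 2 * qPochInf (q ^ 20) (q ^ 20) /
      qPochInf (q ^ 4) (q ^ 4) ≠ 0 :=
    div_ne_zero (mul_ne_zero (pow_ne_zero 2 (hne (by simp))) (hne (by simp))) (hne (by simp))
  have hpos := ramTheta_mul_ramTheta_eq_mul_psi_div_psi hq
  have hneg := ramTheta_mul_ramTheta_eq_mul_psi_div_psi (q := -q) (by rwa [norm_neg])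
  simp (decide := true) only [Odd.neg_pow, Even.neg_pow] at hneg
  rw [div_mul_div_comm, hpos, hneg, mul_div_mul_left _ _ hfactor, div_div_div_eq,
    mul_comm (psi (-q))]

theorem stmt9 (q : ℝ) (hq0 : 0 < q) (hq1 : q < 1) :
    Gamma1 q * Gamma2 q
      = psi (q : ℂ) * psi (-(q : ℂ) ^ 5) / (psi (-(q : ℂ)) * psi ((q : ℂ) ^ 5)) :=
  stmt9_general q (by rwa [Complex.norm_of_nonneg hq0.le])
end
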